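/- arXiv:math/0110056 — 2 statements merged into one kernel-verified Lean document; each statement's English description precedes it below -/
import Mathlib

section
/- For all integers n ≥ 1 and k ≥ 1, the numbers f_{112}(n,k) of words in [k]^n avoiding the pattern 112 satisfy the recurrence f_{112}(n,k) - f_{112}(n,k-1) = f_{112}(n-1,k) + (n-1) · f_{112}(n-1,k-1). -/
/-- A word `σ ∈ [k]^n` (encoded as `σ : Fin n → Fin k`) contains the pattern `τ`
(encoded as a list of natural numbers) if there is a strictly increasing choice of
positions on which `σ` is order-isomorphic to `τ`. -/
def WordContains {n k : ℕ} (σ : Fin n → Fin k) (τ : List ℕ) : Prop :=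
  ∃ f : Fin τ.length → Fin n, StrictMono f ∧
    ∀ a b : Fin τ.length,
      (σ (f a) < σ (f b) ↔ τ.get a < τ.get b) ∧
      (σ (f a) = σ (f b) ↔ τ.get a = τ.get b)

/-- `avoiders n k T` is the number of words in `[k]^n` that avoid every pattern in `T`,
i.e. `f_T(n,k)`. -/
noncomputable def avoiders (n k : ℕ) (T : Set (List ℕ)) : ℕ :=
  Nat.card {σ : Fin n → Fin k // ∀ τ ∈ T, ¬ WordContains σ τ}

/-- A concrete form of 112-avoidance. -/
def Av {n k : ℕ} (σ : Fin n → Fin k) : Prop :=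
  ∀ i j l : Fin n, i < j → j < l → σ i = σ j → ¬ σ j < σ l

theorem av_iff {n k : ℕ} (σ : Fin n → Fin k) :
    (∀ τ ∈ ({[1, 1, 2]} : Set (List ℕ)), ¬ WordContains σ τ) ↔ Av σ := by
  simp only [Set.mem_singleton_iff, forall_eq]
  constructor
  · intro h i j l hij hjl he hlt
    apply h
    refine ⟨![i, j, l], ?_, ?_⟩
    · intro a b hab
      change Fin 3 at a b
      fin_cases a <;> fin_cases b <;> simp at hab ⊢ <;> first | assumption | exact hij.trans hjl
    · intro a b
      change Fin 3 at a b
      fin_cases a <;> fin_cases b <;> simp [he, hlt, hlt.le, hlt.ne, hlt.ne']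
  · rintro h ⟨f, hf, hh⟩
    have h01 : (⟨0, by simp⟩ : Fin [1, 1, 2].length) < ⟨1, by simp⟩ := by simp
    have h12 : (⟨1, by simp⟩ : Fin [1, 1, 2].length) < ⟨2, by simp⟩ := by simp
    exact h _ _ _ (hf h01) (hf h12) ((hh _ _).2.2 (by simp)) ((hh _ _).1.2 (by simp))

theorem Av.comp {n m k : ℕ} {σ : Fin n → Fin k} (h : Av σ) {f : Fin m → Fin n}
    (hf : StrictMono f) : Av (fun i => σ (f i)) :=
  fun _ _ _ hij hjl he hlt => h _ _ _ (hf hij) (hf hjl) he hlt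

theorem av_succ {n k : ℕ} {σ : Fin n → Fin k} :
    Av (fun i => (σ i).succ) ↔ Av σ := by
  simp [Av]

theorem av_snoc {n k : ℕ} {τ : Fin n → Fin (k + 1)} (h : Av τ) :
    Av (Fin.snoc τ 0 : Fin (n + 1) → Fin (k + 1)) := by
  intro i j l hij hjl he hlt
  induction l using Fin.lastCases with
  | last => simp at hlt
  | cast l =>
    induction j using Fin.lastCases with
    | last => exact absurd hjl (by simp [Fin.le_last])
    | cast j =>
      induction i using Fin.lastCases with
      | last => exact absurd hij (by simp [Fin.le_last])
      | cast i =>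
        simp only [Fin.snoc_castSucc] at he hlt
        exact h i j l (by simpa using hij) (by simpa using hjl) he hlt

theorem av_insert {n k : ℕ} {τ : Fin n → Fin k} (h : Av τ) (p : Fin (n + 1)) :
    Av (p.insertNth 0 (fun i => (τ i).succ) : Fin (n + 1) → Fin (k + 1)) := by
  intro i j l hij hjl he hlt
  rcases Fin.eq_self_or_eq_succAbove p i with rfl | ⟨i, rfl⟩
  · rcases Fin.eq_self_or_eq_succAbove i j with rfl | ⟨j, rfl⟩
    · exact lt_irrefl _ hij
    · simp only [Fin.insertNth_apply_same, Fin.insertNth_apply_succAbove] at he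
      exact Fin.succ_ne_zero _ he.symm
  rcases Fin.eq_self_or_eq_succAbove p j with rfl | ⟨j, rfl⟩
  · simp only [Fin.insertNth_apply_same, Fin.insertNth_apply_succAbove] at he
    exact Fin.succ_ne_zero _ he
  rcases Fin.eq_self_or_eq_succAbove p l with rfl | ⟨l, rfl⟩
  · simp at hlt
  simp only [Fin.insertNth_apply_succAbove] at he hlt
  exact h i j l (by simpa using hij) (by simpa using hjl) (by simpa using he) (by simpa using hlt)

/-- The decomposition of avoiding words. -/
def build (m K : ℕ) :
    {σ : Fin m → Fin (K + 1) // Av σ} ⊕ {σ : Fin (m + 1) → Fin K // Av σ} ⊕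
      (Fin m × {σ : Fin m → Fin K // Av σ}) →
    {σ : Fin (m + 1) → Fin (K + 1) // Av σ}
  | .inl τ => ⟨Fin.snoc τ.1 0, av_snoc τ.2⟩
  | .inr (.inl τ) => ⟨fun i => (τ.1 i).succ, av_succ.2 τ.2⟩
  | .inr (.inr (p, τ)) => ⟨p.castSucc.insertNth 0 (fun i => (τ.1 i).succ), av_insert τ.2 _⟩

theorem insert_last {m K : ℕ} (p : Fin m) (τ : Fin m → Fin K) :
    (p.castSucc.insertNth 0 (fun i => (τ i).succ) : Fin (m + 1) → Fin (K + 1)) (Fin.last m)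
      ≠ 0 := by
  rcases Fin.eq_self_or_eq_succAbove p.castSucc (Fin.last m) with h | ⟨i, h⟩
  · exact absurd h.symm (Fin.castSucc_lt_last p).ne
  · rw [h, Fin.insertNth_apply_succAbove]; exact Fin.succ_ne_zero _

theorem build_bijective (m K : ℕ) : Function.Bijective (build m K) := by
  constructor
  · rintro (⟨τ, hτ⟩ | ⟨τ, hτ⟩ | ⟨p, τ, hτ⟩) (⟨ρ, hρ⟩ | ⟨ρ, hρ⟩ | ⟨q, ρ, hρ⟩) h <;>
      have h := congrArg Subtype.val h <;> simp only [build] at h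
    · congr 2
      funext i
      simpa using congrFun h i.castSucc
    · have := congrFun h (Fin.last m)
      simp only [Fin.snoc_last] at this
      exact absurd this.symm (Fin.succ_ne_zero _)
    · have := congrFun h (Fin.last m)
      simp only [Fin.snoc_last] at this
      exact absurd this.symm (insert_last _ _)
    · have := congrFun h (Fin.last m)
      simp only [Fin.snoc_last] at this
      exact absurd this (Fin.succ_ne_zero _)
    · congr 3
      funext i
      simpa using congrFun h i
    · have := congrFun h q.castSucc
      simp only [Fin.insertNth_apply_same] at this
      exact absurd this (Fin.succ_ne_zero _)
    · have := congrFun h (Fin.last m)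
      simp only [Fin.snoc_last] at this
      exact absurd this (insert_last _ _)
    · have := congrFun h p.castSucc
      simp only [Fin.insertNth_apply_same] at this
      exact absurd this.symm (Fin.succ_ne_zero _)
    · have hpq : p = q := by
        have := congrFun h p.castSucc
        rw [Fin.insertNth_apply_same] at this
        rcases Fin.eq_self_or_eq_succAbove q.castSucc p.castSucc with h' | ⟨i, h'⟩
        · exact Fin.castSucc_injective _ h'
        · rw [h', Fin.insertNth_apply_succAbove] at this
          exact absurd this.symm (Fin.succ_ne_zero _)
      subst hpq
      have : τ = ρ := by
        funext i
        simpa only [Fin.insertNth_apply_succAbove, Fin.succ_inj] using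
          congrFun h (p.castSucc.succAbove i)
      subst this
      rfl
  · rintro ⟨σ, hσ⟩
    by_cases hl : σ (Fin.last m) = 0
    · refine ⟨.inl ⟨fun i => σ i.castSucc, hσ.comp (Fin.strictMono_castSucc)⟩, ?_⟩
      apply Subtype.ext
      funext i
      induction i using Fin.lastCases <;> simp [build, hl]
    by_cases h0 : ∃ p, σ p = 0
    · obtain ⟨p, hp⟩ := h0
      induction p using Fin.lastCases with
      | last => exact absurd hp hl
      | cast p =>
      have key : ∀ i, σ (p.castSucc.succAbove i) ≠ 0 := by
        intro i hi
        have hne : p.castSucc.succAbove i ≠ p.castSucc := Fin.succAbove_ne _ _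
        have hil : p.castSucc.succAbove i < Fin.last m :=
          lt_of_le_of_ne (Fin.le_last _) (fun h => hl (h ▸ hi))
        have hpos := Fin.pos_iff_ne_zero.2 hl
        rcases lt_or_gt_of_ne hne with h | h
        · exact hσ _ _ _ h (Fin.castSucc_lt_last p) (hi.trans hp.symm) (hp ▸ hpos)
        · exact hσ _ _ _ h hil (hp.trans hi.symm) (by rw [hi]; exact hpos)
      refine ⟨.inr (.inr (p, ⟨fun i => (σ (p.castSucc.succAbove i)).pred (key i), ?_⟩)), ?_⟩
      · rw [← av_succ]
        simpa using hσ.comp (Fin.strictMono_succAbove p.castSucc)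
      · apply Subtype.ext
        funext i
        rcases Fin.eq_self_or_eq_succAbove p.castSucc i with rfl | ⟨i, rfl⟩
        · simp only [build, Fin.insertNth_apply_same, hp]
        · simp only [build, Fin.insertNth_apply_succAbove, Fin.succ_pred]
    · push Not at h0
      refine ⟨.inr (.inl ⟨fun i => (σ i).pred (h0 i), ?_⟩), ?_⟩
      · rw [← av_succ]
        simpa using hσ
      · apply Subtype.ext
        funext i
        simp [build]

theorem avoiders_eq (n k : ℕ) :
    avoiders n k {[1, 1, 2]} = Nat.card {σ : Fin n → Fin k // Av σ} :=
  Nat.card_congr (Equiv.subtypeEquivRight av_iff)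

/-- f_{112}(n,k) - f_{112}(n,k-1) = f_{112}(n-1,k) + (n-1)·f_{112}(n-1,k-1) for n,k ≥ 1. -/
theorem avoid_112_recurrence (n k : ℕ) (hn : 1 ≤ n) (hk : 1 ≤ k) :
    (avoiders n k {[1, 1, 2]} : ℤ) - (avoiders n (k - 1) {[1, 1, 2]} : ℤ) =
      ((avoiders (n - 1) k {[1, 1, 2]} +
        (n - 1) * avoiders (n - 1) (k - 1) {[1, 1, 2]} : ℕ) : ℤ) := by
  obtain ⟨m, rfl⟩ := Nat.exists_eq_add_of_le' hn
  obtain ⟨K, rfl⟩ := Nat.exists_eq_add_of_le' hk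
  have h := Nat.card_eq_of_bijective _ (build_bijective m K)
  simp only [Nat.card_sum, Nat.card_prod, Nat.card_fin] at h
  simp only [Nat.add_sub_cancel, avoiders_eq]
  rw [← h]
  push_cast
  ring
end

section
/- For all integers n ≥ 1 and k ≥ 1, the numbers f_{112,121}(n,k) of words in [k]^n avoiding both patterns 112 and 121 satisfy the recurrence f_{112,121}(n,k) = f_{112,121}(n,k-1) + n · f_{112,121}(n-1,k-1) + ∑_{j=2}^{n} f_{112,121}(n-j, k-1). -/
/-- Repeated letters dominate everything after the first copy. -/
def GoodWord {n k : ℕ} (σ : Fin n → Fin k) : Prop :=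
  ∀ i j l : Fin n, i < j → σ i = σ j → i < l → σ l ≤ σ i

theorem avoid_iff_good {n k : ℕ} (σ : Fin n → Fin k) :
    (∀ τ ∈ ({[1, 1, 2], [1, 2, 1]} : Set (List ℕ)), ¬ WordContains σ τ) ↔ GoodWord σ := by
  constructor
  · intro h i j l hij hs hil
    by_contra hlt
    push Not at hlt
    rcases lt_trichotomy j l with hjl | hjl | hjl
    · refine h [1, 1, 2] (by simp) ⟨![i, j, l], ?_, ?_⟩
      · rw [Fin.strictMono_iff_lt_succ]
        intro a
        fin_cases a
        · exact hij
        · exact hjl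
      · intro a b
        have h1 := hlt.ne
        have h2 := hlt.ne'
        have h3 := hlt.le
        have h4 := hs ▸ hlt
        fin_cases a <;> fin_cases b <;> simp [← hs, hlt, h1, h2, h3]
    · subst hjl
      rw [hs] at hlt
      exact lt_irrefl _ hlt
    · refine h [1, 2, 1] (by simp) ⟨![i, l, j], ?_, ?_⟩
      · rw [Fin.strictMono_iff_lt_succ]
        intro a
        fin_cases a
        · exact hil
        · exact hjl
      · intro a b
        have h1 := hlt.ne
        have h2 := hlt.ne'
        have h3 := hlt.le
        fin_cases a <;> fin_cases b <;> simp [← hs, hlt, h1, h2, h3]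
  · intro h τ hτ hc
    simp only [Set.mem_insert_iff, Set.mem_singleton_iff] at hτ
    rcases hτ with rfl | rfl
    · obtain ⟨f, hf, hp⟩ := hc
      have e1 : σ (f 0) = σ (f 1) := (hp 0 1).2.2 rfl
      have e2 : σ (f 0) < σ (f 2) := (hp 0 2).1.2 (by decide)
      have := h (f 0) (f 1) (f 2) (hf (by decide)) e1 (hf (by decide))
      exact absurd e2 (not_lt.2 this)
    · obtain ⟨f, hf, hp⟩ := hc
      have e1 : σ (f 0) = σ (f 2) := (hp 0 2).2.2 rfl
      have e2 : σ (f 0) < σ (f 1) := (hp 0 1).1.2 (by decide)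
      have := h (f 0) (f 2) (f 1) (hf (by decide)) e1 (hf (by decide))
      exact absurd e2 (not_lt.2 this)

open Classical in
/-- The finset of good words. -/
noncomputable def goodWords (n k : ℕ) : Finset (Fin n → Fin k) :=
  Finset.univ.filter GoodWord

theorem avoiders_eq_s11 (n k : ℕ) :
    avoiders n k {[1, 1, 2], [1, 2, 1]} = (goodWords n k).card := by
  classical
  unfold avoiders goodWords
  simp only [avoid_iff_good]
  rw [Nat.card_eq_fintype_card, Fintype.card_subtype]

/-- The positions of the smallest letter. -/
def zeroSet {n k : ℕ} (σ : Fin n → Fin (k + 1)) : Finset (Fin n) :=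
  Finset.univ.filter fun i => σ i = 0

/-- Admissible sets of positions of the smallest letter. -/
def Admissible {n : ℕ} (S : Finset (Fin n)) : Prop :=
  ∀ i j l : Fin n, i < j → i ∈ S → j ∈ S → i < l → l ∈ S

theorem mem_zeroSet {n k : ℕ} (σ : Fin n → Fin (k + 1)) (i : Fin n) :
    i ∈ zeroSet σ ↔ σ i = 0 := by simp [zeroSet]

theorem admissible_zeroSet {n k : ℕ} (σ : Fin n → Fin (k + 1)) (h : GoodWord σ) :
    Admissible (zeroSet σ) := by
  intro i j l hij hi hj hil
  rw [mem_zeroSet] at *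
  have := h i j l hij (hi.trans hj.symm) hil
  rw [hi] at this
  exact le_antisymm this (Fin.zero_le _)

theorem card_fiber {n k m : ℕ} (S : Finset (Fin n)) (hS : Admissible S) (hm : Sᶜ.card = m) :
    ((goodWords n (k + 1)).filter fun σ => zeroSet σ = S).card = (goodWords m k).card := by
  classical
  let e := Sᶜ.orderEmbOfFin hm
  have he : ∀ i, e i ∉ S := fun i => by
    have := Finset.orderEmbOfFin_mem Sᶜ hm i
    exact Finset.mem_compl.1 this
  have hr : ∀ x, x ∉ S → ∃ i, e i = x := fun x hx => by
    have := Finset.range_orderEmbOfFin Sᶜ hm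
    have hx' : x ∈ Set.range (Sᶜ.orderEmbOfFin hm) := by rw [this]; simpa using hx
    exact hx'
  let g : (Fin m → Fin k) → (Fin n → Fin (k + 1)) := fun ρ =>
    Function.extend e (fun i => (ρ i).succ) (fun _ => 0)
  have g1 : ∀ ρ i, g ρ (e i) = (ρ i).succ := fun ρ i => e.injective.extend_apply _ _ _
  have g0 : ∀ ρ x, x ∈ S → g ρ x = 0 := fun ρ x hx =>
    Function.extend_apply' _ _ _ (by rintro ⟨i, rfl⟩; exact he i hx)
  have gz : ∀ ρ, zeroSet (g ρ) = S := by
    intro ρ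
    ext x
    rw [mem_zeroSet]
    by_cases hx : x ∈ S
    · simp [hx, g0]
    · obtain ⟨i, rfl⟩ := hr x hx
      simp [hx, g1, Fin.succ_ne_zero]
  symm
  refine Finset.card_bij (fun ρ _ => g ρ) ?_ ?_ ?_
  · intro ρ hρ
    simp only [goodWords, Finset.mem_filter, Finset.mem_univ, true_and] at hρ ⊢
    refine ⟨?_, gz ρ⟩
    intro i j l hij hs hil
    by_cases hl : l ∈ S
    · rw [g0 ρ l hl]; exact Fin.zero_le _
    have hi : i ∉ S := by
      intro hi
      have hj : j ∈ S := by
        rw [← gz ρ, mem_zeroSet, ← hs, g0 ρ i hi]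
      exact hl (hS i j l hij hi hj hil)
    have hj : j ∉ S := by
      intro hj
      apply hi
      rw [← gz ρ, mem_zeroSet, hs, g0 ρ j hj]
    obtain ⟨i, rfl⟩ := hr i hi
    obtain ⟨j, rfl⟩ := hr j hj
    obtain ⟨l, rfl⟩ := hr l hl
    rw [g1, g1] at *
    rw [Fin.succ_le_succ_iff]
    exact hρ i j l (e.lt_iff_lt.1 hij) (Fin.succ_injective _ hs) (e.lt_iff_lt.1 hil)
  · intro ρ _ ρ' _ h
    funext i
    have := congrFun h (e i)
    rw [g1, g1] at this
    exact Fin.succ_injective _ this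
  · intro σ hσ
    simp only [goodWords, Finset.mem_filter, Finset.mem_univ, true_and] at hσ
    obtain ⟨hg, hz⟩ := hσ
    have hne : ∀ i, σ (e i) ≠ 0 := fun i h => he i (by rw [← hz, mem_zeroSet]; exact h)
    refine ⟨fun i => (σ (e i)).pred (hne i), ?_, ?_⟩
    · simp only [goodWords, Finset.mem_filter, Finset.mem_univ, true_and]
      intro i j l hij hs hil
      rw [Fin.pred_le_pred_iff]
      exact hg _ _ _ (e.lt_iff_lt.2 hij) (Fin.pred_inj.1 hs) (e.lt_iff_lt.2 hil)
    · funext x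
      by_cases hx : x ∈ S
      · rw [g0 _ x hx]
        rw [← hz, mem_zeroSet] at hx
        exact hx.symm
      · obtain ⟨i, rfl⟩ := hr x hx
        rw [g1, Fin.succ_pred]

/-- The last `j` positions. -/
def tailSet (n j : ℕ) : Finset (Fin n) := Finset.univ.filter fun i => n - j ≤ (i : ℕ)

theorem mem_tailSet {n j : ℕ} (i : Fin n) : i ∈ tailSet n j ↔ n - j ≤ (i : ℕ) := by
  simp [tailSet]

theorem card_tailSet_compl {n j : ℕ} : (tailSet n j)ᶜ.card = n - j := by
  have : (tailSet n j)ᶜ = Finset.univ.filter fun i : Fin n => (i : ℕ) < n - j := by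
    ext i; simp [tailSet]; omega
  rw [this, Fin.card_filter_val_lt]
  omega

theorem card_tailSet {n j : ℕ} (h : j ≤ n) : (tailSet n j).card = j := by
  have := Finset.card_add_card_compl (tailSet n j)
  rw [card_tailSet_compl, Fintype.card_fin] at this
  omega

theorem admissible_cases {n : ℕ} (S : Finset (Fin n)) (hS : Admissible S) :
    S = ∅ ∨ (∃ i, S = {i}) ∨ ∃ j ∈ Finset.Icc 2 n, S = tailSet n j := by
  rcases S.eq_empty_or_nonempty with h | h
  · exact Or.inl h
  right
  set a := S.min' h with ha
  have haS : a ∈ S := S.min'_mem h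
  have hmin : ∀ x ∈ S, a ≤ x := fun x hx => S.min'_le x hx
  by_cases h1 : ∃ b ∈ S, b ≠ a
  · right
    obtain ⟨b, hb, hba⟩ := h1
    have hab : a < b := lt_of_le_of_ne (hmin b hb) hba.symm
    have hbn := b.isLt
    have hab' : (a : ℕ) < b := hab
    refine ⟨n - a, Finset.mem_Icc.2 ⟨by omega, by omega⟩, ?_⟩
    ext x
    rw [mem_tailSet]
    have han : n - (n - (a : ℕ)) = a := by omega
    rw [han]
    constructor
    · exact fun hx => hmin x hx
    · intro hx
      rcases (show a ≤ x from hx).eq_or_lt with rfl | hlt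
      · exact haS
      · exact hS a b x hab haS hb hlt
  · left
    push Not at h1
    exact ⟨a, Finset.eq_singleton_iff_unique_mem.2 ⟨haS, h1⟩⟩

theorem good_recurrence (n k : ℕ) :
    (goodWords n (k + 1)).card = (goodWords n k).card + n * (goodWords (n - 1) k).card +
      ∑ j ∈ Finset.Icc 2 n, (goodWords (n - j) k).card := by
  classical
  let B : Finset (Finset (Fin n)) := Finset.univ.image fun i : Fin n => {i}
  let C : Finset (Finset (Fin n)) := (Finset.Icc 2 n).image (tailSet n)
  have hB : ∀ S ∈ B, S.card = 1 := by
    intro S hS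
    obtain ⟨i, _, rfl⟩ := Finset.mem_image.1 hS
    simp
  have hC : ∀ S ∈ C, 2 ≤ S.card := by
    intro S hS
    obtain ⟨j, hj, rfl⟩ := Finset.mem_image.1 hS
    rw [Finset.mem_Icc] at hj
    rw [card_tailSet hj.2]; exact hj.1
  have hd1 : Disjoint ({∅} : Finset (Finset (Fin n))) B := by
    rw [Finset.disjoint_singleton_left]
    intro h
    simpa using hB _ h
  have hd2 : Disjoint (({∅} : Finset (Finset (Fin n))) ∪ B) C := by
    rw [Finset.disjoint_left]
    intro S hS hS'
    have h2 := hC _ hS'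
    rcases Finset.mem_union.1 hS with h | h
    · rw [Finset.mem_singleton.1 h] at h2; simp at h2
    · have := hB _ h; omega
  rw [Finset.card_eq_sum_card_fiberwise (f := zeroSet) (t := ({∅} ∪ B) ∪ C)]
  · rw [Finset.sum_union hd2, Finset.sum_union hd1, Finset.sum_singleton]
    congr 1
    · congr 1
      · exact card_fiber ∅ (by intro i j l _ h; simp at h) (by simp)
      · rw [Finset.sum_image (by intro a _ b _ h; simpa using h)]
        rw [Finset.sum_congr rfl (g := fun _ => (goodWords (n - 1) k).card)]
        · simp
        · intro i _
          refine card_fiber {i} ?_ ?_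
          · intro a b l hab h1 h2
            rw [Finset.mem_singleton] at h1 h2
            subst h1 h2
            exact absurd hab (lt_irrefl _)
          · rw [Finset.card_compl]; simp
    · rw [Finset.sum_image]
      · refine Finset.sum_congr rfl fun j _ => card_fiber _ ?_ card_tailSet_compl
        intro a b l _ h1 _ hal
        rw [mem_tailSet] at *
        have : (a : ℕ) < l := hal
        omega
      · intro a ha b hb h
        have ha' := Finset.mem_Icc.1 ha
        have hb' := Finset.mem_Icc.1 hb
        have := congrArg Finset.card h
        rwa [card_tailSet ha'.2, card_tailSet hb'.2] at this
  · intro σ hσ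
    have hσ' : GoodWord σ := by simpa [goodWords] using hσ
    rcases admissible_cases _ (admissible_zeroSet σ hσ') with h | ⟨i, h⟩ | ⟨j, hj, h⟩
    · rw [h]; simp
    · rw [h]; simp [B]
    · rw [h]
      exact Finset.mem_coe.2 (Finset.mem_union_right _ (Finset.mem_image_of_mem _ hj))

/-- f_{112,121}(n,k) = f_{112,121}(n,k-1) + n·f_{112,121}(n-1,k-1)
+ ∑_{j=2}^{n} f_{112,121}(n-j,k-1) for n, k ≥ 1. -/
theorem avoid_112_121_recurrence (n k : ℕ) (hn : 1 ≤ n) (hk : 1 ≤ k) :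
    avoiders n k {[1, 1, 2], [1, 2, 1]} =
      avoiders n (k - 1) {[1, 1, 2], [1, 2, 1]} +
        n * avoiders (n - 1) (k - 1) {[1, 1, 2], [1, 2, 1]} +
        ∑ j ∈ Finset.Icc 2 n, avoiders (n - j) (k - 1) {[1, 1, 2], [1, 2, 1]} := by
  obtain ⟨k, rfl⟩ : ∃ m, k = m + 1 := ⟨k - 1, by omega⟩
  simp only [avoiders_eq_s11, Nat.add_sub_cancel]
  exact good_recurrence n k
end
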